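/- Single world property: if there exist an intuitionistic Kripke model M and a team t such that M,t ⊭ φ, then there exist an intuitionistic Kripke model M' and a world w such that M',w ⊭ φ (i.e., M',{w} ⊭ φ). -/

import Mathlib

/-- Formulas of the language L: atoms, ⊥, ∧, ∨, →, and inquisitive disjunction ⩾. -/
inductive Formula (P : Type) : Type
  | atom : P → Formula P
  | bot  : Formula P
  | and  : Formula P → Formula P → Formula P
  | or   : Formula P → Formula P → Formula P
  | impl : Formula P → Formula P → Formula P
  | iorr : Formula P → Formula P → Formula P

namespace Formula

/-- Negation ¬φ := φ → ⊥. -/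
def neg {P : Type} (φ : Formula P) : Formula P := Formula.impl φ Formula.bot

/-- Polar question ?φ := φ ⩾ ¬φ. -/
def question {P : Type} (φ : Formula P) : Formula P := Formula.iorr φ φ.neg

/-- A standard formula contains no occurrence of inquisitive disjunction ⩾. -/
def standard {P : Type} : Formula P → Prop
  | atom _ => True
  | bot => True
  | and φ ψ => φ.standard ∧ ψ.standard
  | or φ ψ => φ.standard ∧ ψ.standard
  | impl φ ψ => φ.standard ∧ ψ.standard
  | iorr _ _ => False

end Formula

/-- An intuitionistic Kripke model: a partially ordered set of worlds with a
persistent valuation. -/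
structure KripkeModel (P : Type) where
  W : Type
  R : W → W → Prop
  refl : ∀ w, R w w
  antisymm : ∀ w v, R w v → R v w → w = v
  trans : ∀ w v u, R w v → R v u → R w u
  V : W → P → Prop
  persistent : ∀ w v p, R w v → V w p → V v p

/-- R[t], the up-set generated by a team t. -/
def KripkeModel.upset {P : Type} (M : KripkeModel P) (t : Set M.W) : Set M.W :=
  {v | ∃ w ∈ t, M.R w v}

/-- The support relation M,t ⊨ φ between teams and formulas. -/
def support {P : Type} (M : KripkeModel P) : Formula P → Set M.W → Prop
  | .atom p, t => ∀ w ∈ t, M.V w p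
  | .bot, t => t = ∅
  | .and φ ψ, t => support M φ t ∧ support M ψ t
  | .or φ ψ, t => ∃ t₁ t₂, t = t₁ ∪ t₂ ∧ support M φ t₁ ∧ support M ψ t₂
  | .impl φ ψ, t => ∀ t', t' ⊆ M.upset t → support M φ t' → support M ψ t'
  | .iorr φ ψ, t => support M φ t ∨ support M ψ t

/-- Truth at a world: M,w ⊨ φ iff M,{w} ⊨ φ. -/
def truth {P : Type} (M : KripkeModel P) (w : M.W) (φ : Formula P) : Prop :=
  support M φ {w}

/-- A formula is truth-conditional if support at a team amounts to truth at each world. -/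
def truthConditional {P : Type} (φ : Formula P) : Prop :=
  ∀ (M : KripkeModel P) (t : Set M.W), support M φ t ↔ ∀ w ∈ t, truth M w φ

/-- The partial truth-value function: `tvalIs M w φ b` says T(w,φ) is defined with value b
(b = true for value 1, i.e. M,w ⊨ φ; b = false for value 0, i.e. M,w ⊨ ¬φ). -/
def tvalIs {P : Type} (M : KripkeModel P) (w : M.W) (φ : Formula P) : Bool → Prop
  | true => truth M w φ
  | false => truth M w φ.neg

/-!
Support is inherited by every team inside the up-set of a supporting team, so a formula true at a
least world is supported by all teams. Adding a least world below a model does not affect support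
at teams of old worlds, because the embedding into the enlarged model is a bounded morphism; hence
a formula that fails at some team of the original model fails at the new least world.
-/

theorem exists_eq_union_of_image_eq_union {α β : Type*} {f : α → β} {t : Set α} {u₁ u₂ : Set β}
    (h : f '' t = u₁ ∪ u₂) : ∃ t₁ t₂, t = t₁ ∪ t₂ ∧ f '' t₁ = u₁ ∧ f '' t₂ = u₂ := by
  refine ⟨t ∩ f ⁻¹' u₁, t ∩ f ⁻¹' u₂, ?_, ?_, ?_⟩
  · rw [← Set.inter_union_distrib_left, ← Set.preimage_union, ← h,
      Set.inter_eq_left.mpr (Set.subset_preimage_image f t)]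
  · rw [Set.image_inter_preimage, h, Set.union_inter_cancel_left]
  · rw [Set.image_inter_preimage, h, Set.union_inter_cancel_right]

section

variable {P : Type}

namespace KripkeModel

theorem upset_subset_upset {M : KripkeModel P} {s t : Set M.W} (h : s ⊆ M.upset t) :
    M.upset s ⊆ M.upset t := by
  rintro u ⟨v, hv, hvu⟩
  obtain ⟨w, hw, hwv⟩ := h hv
  exact ⟨w, hw, M.trans w v u hwv hvu⟩

theorem upset_union (M : KripkeModel P) (s t : Set M.W) :
    M.upset (s ∪ t) = M.upset s ∪ M.upset t := by
  ext v
  simp only [upset, Set.mem_union, Set.mem_ofPred_eq, or_and_right, exists_or]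

theorem upset_empty (M : KripkeModel P) : M.upset ∅ = ∅ := by
  simp only [upset, Set.mem_empty_iff_false, false_and, exists_false, Set.ofPred_false]

end KripkeModel

theorem support_of_subset_upset {M : KripkeModel P} {φ : Formula P} {s t : Set M.W}
    (hst : s ⊆ M.upset t) (ht : support M φ t) : support M φ s := by
  induction φ generalizing s t with
  | atom p =>
    intro v hv
    obtain ⟨w, hw, hwv⟩ := hst hv
    exact M.persistent w v p hwv (ht w hw)
  | bot =>
    obtain rfl : t = ∅ := ht
    exact Set.subset_eq_empty hst M.upset_empty
  | and φ ψ ihφ ihψ => exact ⟨ihφ hst ht.1, ihψ hst ht.2⟩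
  | or φ ψ ihφ ihψ =>
    obtain ⟨t₁, t₂, rfl, h₁, h₂⟩ := ht
    have hcover : s = s ∩ M.upset t₁ ∪ s ∩ M.upset t₂ := by
      rw [← Set.inter_union_distrib_left, ← M.upset_union, Set.inter_eq_left.mpr hst]
    exact ⟨_, _, hcover, ihφ Set.inter_subset_right h₁, ihψ Set.inter_subset_right h₂⟩
  | impl φ ψ =>
    exact fun u hu => ht u (hu.trans (KripkeModel.upset_subset_upset hst))
  | iorr φ ψ ihφ ihψ => exact ht.imp (ihφ hst) (ihψ hst)

theorem support_of_truth_of_forall_rel {M : KripkeModel P} {φ : Formula P} {r : M.W}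
    (hr : ∀ w, M.R r w) (h : truth M r φ) (t : Set M.W) : support M φ t :=
  support_of_subset_upset (t := {r}) (fun w _ => ⟨r, rfl, hr w⟩) h

namespace KripkeModel

/-- Bounded morphisms (p-morphisms) of Kripke models: monotone maps that lift successors and
preserve and reflect the valuation. Taking direct images of teams along them preserves and reflects
support. -/
structure IsBoundedMorphism (M N : KripkeModel P) (f : M.W → N.W) : Prop where
  map_rel : ∀ w v, M.R w v → N.R (f w) (f v)
  exists_rel : ∀ w v', N.R (f w) v' → ∃ v, M.R w v ∧ f v = v'
  val_iff : ∀ w p, N.V (f w) p ↔ M.V w p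

theorem IsBoundedMorphism.upset_image {M N : KripkeModel P} {f : M.W → N.W}
    (hf : IsBoundedMorphism M N f) (t : Set M.W) : N.upset (f '' t) = f '' M.upset t := by
  ext v'
  constructor
  · rintro ⟨_, ⟨w, hw, rfl⟩, hwv⟩
    obtain ⟨v, hv, rfl⟩ := hf.exists_rel w v' hwv
    exact ⟨v, ⟨w, hw, hv⟩, rfl⟩
  · rintro ⟨v, ⟨w, hw, hwv⟩, rfl⟩
    exact ⟨f w, ⟨w, hw, rfl⟩, hf.map_rel w v hwv⟩

theorem IsBoundedMorphism.support_image_iff {M N : KripkeModel P} {f : M.W → N.W}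
    (hf : IsBoundedMorphism M N f) {φ : Formula P} {t : Set M.W} :
    support N φ (f '' t) ↔ support M φ t := by
  induction φ generalizing t with
  | atom p => exact Set.forall_mem_image.trans (forall₂_congr fun w _ => hf.val_iff w p)
  | bot => exact Set.image_eq_empty
  | and φ ψ ihφ ihψ => exact and_congr ihφ ihψ
  | or φ ψ ihφ ihψ =>
    constructor
    · rintro ⟨u₁, u₂, hu, h₁, h₂⟩
      obtain ⟨t₁, t₂, rfl, rfl, rfl⟩ := exists_eq_union_of_image_eq_union hu
      exact ⟨t₁, t₂, rfl, ihφ.1 h₁, ihψ.1 h₂⟩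
    · rintro ⟨t₁, t₂, rfl, h₁, h₂⟩
      exact ⟨f '' t₁, f '' t₂, Set.image_union f t₁ t₂, ihφ.2 h₁, ihψ.2 h₂⟩
  | impl φ ψ ihφ ihψ =>
    simp only [support, hf.upset_image, Set.forall_subset_image_iff, ihφ, ihψ]
  | iorr φ ψ ihφ ihψ => exact or_congr ihφ ihψ

/-- The model obtained from `M` by adding a least world `none`, at which no atom is true; the
worlds of `M` are embedded by `some`. -/
def addRoot (M : KripkeModel P) : KripkeModel P where
  W := Option M.W
  R
    | none, _ => True
    | some _, none => False
    | some w, some v => M.R w v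
  refl
    | none => trivial
    | some w => M.refl w
  antisymm
    | none, none, _, _ => rfl
    | some w, some v, hwv, hvw => congrArg some (M.antisymm w v hwv hvw)
  trans
    | none, _, _, _, _ => trivial
    | some w, some v, some u, hwv, hvu => M.trans w v u hwv hvu
  V
    | none, _ => False
    | some w, p => M.V w p
  persistent
    | some w, some v, p, hwv, hw => M.persistent w v p hwv hw

theorem isBoundedMorphism_some (M : KripkeModel P) : IsBoundedMorphism M M.addRoot some where
  map_rel _ _ hwv := hwv
  exists_rel
    | _, some v, hwv => ⟨v, hwv, rfl⟩
  val_iff _ _ := Iff.rfl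

end KripkeModel

end

/-- single world property: any formula falsifiable at some team is
falsifiable at a single world of some model. -/
theorem single_world_property {P : Type} (φ : Formula P)
    (h : ∃ (M : KripkeModel P) (t : Set M.W), ¬ support M φ t) :
    ∃ (M' : KripkeModel P) (w : M'.W), ¬ truth M' w φ := by
  obtain ⟨M, t, ht⟩ := h
  refine ⟨M.addRoot, none, fun hroot => ht ?_⟩
  have himage : support M.addRoot φ (some '' t) :=
    support_of_truth_of_forall_rel (fun _ => trivial) hroot _
  exact M.isBoundedMorphism_some.support_image_iff.1 himage
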